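/- arXiv:0812.3353 — 2 statements merged into one kernel-verified Lean document; each statement's English description precedes it below -/
import Mathlib

section
/- Let p be a point in the hyperbolic plane and σ a geodesic segment such that every point of σ lies at distance at least R from p. Then the angle subtended at p by the endpoints of σ satisfies ∠_p(σ(a), σ(b)) ≤ π/(cosh R − 1). -/
/-!
STATEMENT 1: Let `p` be a point in the hyperbolic plane and `σ` a geodesic
segment all of whose points lie at distance at least `R` from `p`.  Then the
angle subtended at `p` by the endpoints of `σ` satisfies
`∠ₚ(σ a, σ b) ≤ π / (cosh R - 1)`.

We use Mathlib's hyperbolic metric on `UpperHalfPlane`, and the Alexandrov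
angle (infimum of Euclidean comparison angles over points on the geodesics from
the vertex), which agrees with the Riemannian angle in the hyperbolic plane.
-/
open Set

noncomputable section

variable {X : Type*}

/-- `γ` is a unit-speed geodesic segment from `x` to `y`, parametrized on
`[0, dist x y]`. -/
def IsGeodesicSegBetween [MetricSpace X] (γ : ℝ → X) (x y : X) : Prop :=
  γ 0 = x ∧ γ (dist x y) = y ∧
    ∀ s ∈ Icc (0 : ℝ) (dist x y), ∀ t ∈ Icc (0 : ℝ) (dist x y),
      dist (γ s) (γ t) = |s - t|

/-- A geodesic metric space: any two points are joined by a geodesic segment. -/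
def GeodesicSpace (X : Type*) [MetricSpace X] : Prop :=
  ∀ x y : X, ∃ γ : ℝ → X, IsGeodesicSegBetween γ x y

/-- The image (side) of a geodesic segment from `x` to `y`. -/
def SideSet [MetricSpace X] (γ : ℝ → X) (x y : X) : Set X :=
  γ '' Icc (0 : ℝ) (dist x y)

/-- A triangle with sides `s₁ s₂ s₃` is `δ`-thin: each side is contained in the
`δ`-neighbourhood of the union of the other two sides. -/
def ThinTriangle [MetricSpace X] (δ : ℝ) (s₁ s₂ s₃ : Set X) : Prop :=
  (∀ p ∈ s₁, ∃ q ∈ s₂ ∪ s₃, dist p q ≤ δ) ∧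
  (∀ p ∈ s₂, ∃ q ∈ s₁ ∪ s₃, dist p q ≤ δ) ∧
  (∀ p ∈ s₃, ∃ q ∈ s₁ ∪ s₂, dist p q ≤ δ)

/-- Gromov hyperbolicity of a (geodesic) metric space: there is `δ ≥ 0` such
that all geodesic triangles are `δ`-thin. -/
def GromovHyperbolic (X : Type*) [MetricSpace X] : Prop :=
  ∃ δ : ℝ, 0 ≤ δ ∧ ∀ (A B C : X) (γa γb γc : ℝ → X),
    IsGeodesicSegBetween γa B C → IsGeodesicSegBetween γb A C →
      IsGeodesicSegBetween γc A B →
        ThinTriangle δ (SideSet γa B C) (SideSet γb A C) (SideSet γc A B)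

/-- Euclidean comparison angle at the vertex `p` of the triangle `p x y`. -/
def compAngle [MetricSpace X] (p x y : X) : ℝ :=
  Real.arccos ((dist p x ^ 2 + dist p y ^ 2 - dist x y ^ 2) /
    (2 * dist p x * dist p y))

/-- `z` lies (metrically) between `x` and `y`. -/
def MetricBtw [MetricSpace X] (x z y : X) : Prop :=
  dist x z + dist z y = dist x y

/-- The (Alexandrov) angle at `p` between the geodesics from `p` to `x` and from
`p` to `y`, as the infimum of comparison angles over points between `p` and the
endpoints; in a nonpositively curved space this is the usual Riemannian angle. -/
def angleAt [MetricSpace X] (p x y : X) : ℝ :=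
  sInf {θ : ℝ | ∃ u v : X, MetricBtw p u x ∧ u ≠ p ∧ MetricBtw p v y ∧ v ≠ p ∧
    θ = compAngle p u v}

/-- The CAT(0) comparison inequality: distances from a vertex to points of the
opposite side of any geodesic triangle are bounded by the corresponding
distances in the Euclidean comparison triangle. -/
def CATzero (X : Type*) [MetricSpace X] : Prop :=
  ∀ (x y z : X) (γ : ℝ → X), IsGeodesicSegBetween γ y z →
    ∀ s ∈ Icc (0 : ℝ) (dist y z),
      dist x (γ s) ^ 2 ≤ (1 - s / dist y z) * dist x y ^ 2 +
        (s / dist y z) * dist x z ^ 2 - s * (dist y z - s)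

/-- The comparison angle in the hyperbolic plane (curvature `-1`) at the vertex
adjacent to sides of lengths `b`, `c` and opposite a side of length `a`,
via the hyperbolic law of cosines. -/
def hypCompAngle (a b c : ℝ) : ℝ :=
  Real.arccos ((Real.cosh b * Real.cosh c - Real.cosh a) /
    (Real.sinh b * Real.sinh c))

/-- The CAT(-1) comparison inequality (comparison with triangles in the
hyperbolic plane of curvature `-1`), via the hyperbolic law of cosines; for a
simply connected complete Riemannian manifold it is equivalent to `sec ≤ -1`. -/
def CATminusOne (X : Type*) [MetricSpace X] : Prop :=
  ∀ (x y z : X) (γ : ℝ → X), IsGeodesicSegBetween γ y z →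
    ∀ s ∈ Icc (0 : ℝ) (dist y z),
      Real.cosh (dist x (γ s)) ≤
        Real.cosh (dist x y) * Real.cosh s -
          Real.sinh (dist x y) * Real.sinh s *
            Real.cos (hypCompAngle (dist x z) (dist x y) (dist y z))

/-- `σ` is a unit-speed geodesic on the interval `[a, b]`. -/
def IsGeodesicOn [MetricSpace X] (σ : ℝ → X) (a b : ℝ) : Prop :=
  a ≤ b ∧ ∀ s ∈ Icc a b, ∀ t ∈ Icc a b, dist (σ s) (σ t) = |s - t|

/-!
Two sides of a triangle in a `CAT(-1)` space make an angle at their common vertex `p` which is at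
most the angle of the hyperbolic comparison triangle, so only hyperbolic triangles matter.
There, let `m` be the point where the bisector at `p` meets the opposite side.
One of the two angles at `m` is at least a right angle, so half the angle `θ` at `p` is at most the
angle of parallelism of `dist p m`, that is `sin (θ / 2) ≤ 1 / cosh (dist p m)`.
In the hyperboloid model `m` is a positive multiple of `v = sinh B • x + sinh A • y`, where `A` and
`B` are the distances from `p` to `x` and `y`, and the two inequalities
`sin (θ / 2) * sinh (A + B) ≤ ‖v‖` and `cosh (dist p m) * ‖v‖ ≤ sinh (A + B)` give the bound.
-/

section RealFunctions

open Real Filter Topology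

lemma arcsin_le_pi_div_two_mul {x : ℝ} (hx₀ : 0 ≤ x) (hx₁ : x ≤ 1) : arcsin x ≤ π / 2 * x := by
  have hmem : π / 2 * x ∈ Icc (-(π / 2)) (π / 2) := by
    constructor <;> nlinarith [pi_pos]
  rw [arcsin_le_iff_le_sin ⟨by linarith, hx₁⟩ hmem]
  calc x = 2 / π * (π / 2 * x) := by field_simp
    _ ≤ sin (π / 2 * x) := mul_le_sin (by positivity) hmem.2

lemma two_mul_arcsin_one_div_cosh_le {R : ℝ} (hR : R ≠ 0) :
    2 * arcsin (1 / cosh R) ≤ π / (cosh R - 1) := by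
  have hcosh : 1 < cosh R := one_lt_cosh.2 hR
  calc 2 * arcsin (1 / cosh R) ≤ 2 * (π / 2 * (1 / cosh R)) := by
        gcongr
        exact arcsin_le_pi_div_two_mul (by positivity) ((div_le_one (by positivity)).2 hcosh.le)
    _ = π / cosh R := by ring
    _ ≤ π / (cosh R - 1) :=
        div_le_div_of_nonneg_left pi_pos.le (by linarith) (by linarith)

lemma arccos_one_sub_two_mul_sq {x : ℝ} (hx₀ : 0 ≤ x) (hx₁ : x ≤ 1) :
    arccos (1 - 2 * x ^ 2) = 2 * arcsin x := by
  have hcos : cos (2 * arcsin x) = 1 - 2 * x ^ 2 := by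
    rw [cos_two_mul, cos_sq', sin_arcsin (by linarith) hx₁]
    ring
  rw [← hcos, arccos_cos (mul_nonneg zero_le_two (arcsin_nonneg.2 hx₀))]
  linarith [arcsin_le_pi_div_two x]

lemma tendsto_sinh_div_self : Tendsto (fun r : ℝ => sinh r / r) (𝓝[≠] 0) (𝓝 1) := by
  simpa [div_eq_inv_mul] using hasDerivAt_iff_tendsto_slope_zero.1 (hasDerivAt_sinh 0)

lemma sinh_sq_add_sinh_sq_add (s t : ℝ) :
    sinh s ^ 2 + sinh t ^ 2 + 2 * sinh s * sinh t * cosh (s + t) = sinh (s + t) ^ 2 := by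
  rw [cosh_add, sinh_add]
  linear_combination -sinh t ^ 2 * cosh_sq s - sinh s ^ 2 * cosh_sq t

lemma sinh_mul_cosh_sub (d s t : ℝ) :
    sinh d * cosh (s - t) = sinh (d - s) * cosh t + sinh s * cosh (d - t) := by
  simp only [sinh_sub, cosh_sub]
  ring

lemma two_mul_sinh_mul_sinh_le_sinh_add {a b : ℝ} (ha : 0 ≤ a) (hb : 0 ≤ b) :
    2 * sinh a * sinh b ≤ sinh (a + b) := by
  rw [sinh_add]
  nlinarith [sinh_nonneg_iff.2 ha, sinh_nonneg_iff.2 hb, sinh_lt_cosh a, sinh_lt_cosh b]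

lemma exists_sinh_eq_mul_and_sinh_sub_eq_mul {c α β : ℝ} (hc : 0 < c) (hα : 0 ≤ α) (hβ : 0 ≤ β)
    (hαβ : 0 < α + β) :
    ∃ s ∈ Icc 0 c, ∃ k > 0, sinh s = k * α ∧ sinh (c - s) = k * β := by
  have hsinh : 0 ≤ sinh c := sinh_nonneg_iff.2 hc.le
  obtain ⟨s, hs, hratio⟩ : ∃ s ∈ Icc 0 c, β * sinh s - α * sinh (c - s) = 0 := by
    refine intermediate_value_Icc hc.le (by fun_prop) ⟨?_, ?_⟩
    · simpa using mul_nonneg hα hsinh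
    · simpa using mul_nonneg hβ hsinh
  have hpos : 0 < sinh s + sinh (c - s) := by
    have hs₀ := self_le_sinh_iff.2 hs.1
    have hs₁ := self_le_sinh_iff.2 (sub_nonneg.2 hs.2)
    linarith
  refine ⟨s, hs, (sinh s + sinh (c - s)) / (α + β), div_pos hpos hαβ, ?_, ?_⟩
  · field_simp
    linear_combination hratio
  · field_simp
    linear_combination -hratio

lemma sinh_mul_sinh_mul_cos_hypCompAngle {a b c : ℝ} (h₁ : |b - c| ≤ a) (h₂ : a ≤ b + c) :
    sinh b * sinh c * cos (hypCompAngle a b c) = cosh b * cosh c - cosh a := by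
  have ha : 0 ≤ a := (abs_nonneg _).trans h₁
  have hb : 0 ≤ b := by linarith [neg_le_of_abs_le h₁]
  have hc : 0 ≤ c := by linarith [le_of_abs_le h₁]
  have hlow : cosh (b - c) ≤ cosh a := cosh_le_cosh.2 (by rwa [abs_of_nonneg ha])
  have hupp : cosh a ≤ cosh (b + c) :=
    cosh_le_cosh.2 (by rwa [abs_of_nonneg ha, abs_of_nonneg (by positivity)])
  rw [cosh_sub] at hlow
  rw [cosh_add] at hupp
  rcases (mul_nonneg (sinh_nonneg_iff.2 hb) (sinh_nonneg_iff.2 hc)).eq_or_lt with h₀ | hpos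
  · rw [← h₀] at hlow hupp ⊢
    linarith
  · rw [hypCompAngle, cos_arccos, mul_div_cancel₀ _ hpos.ne']
    · rw [le_div_iff₀ hpos]
      linarith
    · rw [div_le_one hpos]
      linarith

end RealFunctions

section MetricSpace

open Real

variable [MetricSpace X] {p x y z : X} {γ : ℝ → X} {s r R : ℝ}

lemma IsGeodesicSegBetween.dist_left (hγ : IsGeodesicSegBetween γ x y)
    (hs : s ∈ Icc 0 (dist x y)) : dist x (γ s) = s := by
  have h := hγ.2.2 0 ⟨le_rfl, dist_nonneg⟩ s hs
  rwa [hγ.1, zero_sub, abs_neg, abs_of_nonneg hs.1] at h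

lemma IsGeodesicSegBetween.dist_right (hγ : IsGeodesicSegBetween γ x y)
    (hs : s ∈ Icc 0 (dist x y)) : dist (γ s) y = dist x y - s := by
  have h := hγ.2.2 s hs (dist x y) ⟨dist_nonneg, le_rfl⟩
  rwa [hγ.2.1, abs_sub_comm, abs_of_nonneg (sub_nonneg.2 hs.2)] at h

lemma IsGeodesicSegBetween.metricBtw (hγ : IsGeodesicSegBetween γ x y)
    (hs : s ∈ Icc 0 (dist x y)) : MetricBtw x (γ s) y := by
  rw [MetricBtw, hγ.dist_left hs, hγ.dist_right hs, add_sub_cancel]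

lemma IsGeodesicOn.dist_endpoints {σ : ℝ → X} {a b : ℝ} (hσ : IsGeodesicOn σ a b) :
    dist (σ a) (σ b) = b - a := by
  rw [hσ.2 a ⟨le_rfl, hσ.1⟩ b ⟨hσ.1, le_rfl⟩, abs_sub_comm, abs_of_nonneg (sub_nonneg.2 hσ.1)]

lemma IsGeodesicOn.isGeodesicSegBetween {σ : ℝ → X} {a b : ℝ} (hσ : IsGeodesicOn σ a b) :
    IsGeodesicSegBetween (fun s => σ (a + s)) (σ a) (σ b) := by
  refine ⟨by simp, by simp [hσ.dist_endpoints], fun s hs t ht => ?_⟩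
  rw [hσ.dist_endpoints] at hs ht
  rw [hσ.2 (a + s) ⟨by linarith [hs.1], by linarith [hs.2]⟩ (a + t)
    ⟨by linarith [ht.1], by linarith [ht.2]⟩, add_sub_add_left_eq_sub]

/-- The hyperbolic comparison angle at the vertex `p` of the triangle `p x y`, the curvature `-1`
analogue of `compAngle`. -/
def hypAngle (p x y : X) : ℝ :=
  hypCompAngle (dist x y) (dist p x) (dist p y)

lemma hypAngle_comm (p x y : X) : hypAngle p x y = hypAngle p y x := by
  simp only [hypAngle, hypCompAngle, dist_comm x y, mul_comm]

lemma hypAngle_mem_Icc (p x y : X) : hypAngle p x y ∈ Icc 0 π :=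
  ⟨arccos_nonneg _, arccos_le_pi _⟩

lemma half_hypAngle_mem_Icc (p x y : X) : hypAngle p x y / 2 ∈ Icc 0 (π / 2) :=
  ⟨by linarith [(hypAngle_mem_Icc p x y).1], by linarith [(hypAngle_mem_Icc p x y).2]⟩

lemma sin_half_hypAngle_nonneg (p x y : X) : 0 ≤ sin (hypAngle p x y / 2) :=
  sin_nonneg_of_mem_Icc ⟨(half_hypAngle_mem_Icc p x y).1,
    (half_hypAngle_mem_Icc p x y).2.trans (by linarith [pi_pos])⟩

lemma cosh_dist_eq_sub_cos_hypAngle (p x y : X) :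
    cosh (dist x y) = cosh (dist p x) * cosh (dist p y) -
      sinh (dist p x) * sinh (dist p y) * cos (hypAngle p x y) := by
  rw [hypAngle, sinh_mul_sinh_mul_cos_hypCompAngle, sub_sub_cancel]
  · simpa only [dist_comm] using abs_dist_sub_le x y p
  · simpa only [dist_comm] using dist_triangle x p y

lemma cosh_dist_eq_add_sin_half_hypAngle (p x y : X) :
    cosh (dist x y) = cosh (dist p x - dist p y) +
      2 * sinh (dist p x) * sinh (dist p y) * sin (hypAngle p x y / 2) ^ 2 := by
  have hcos : cos (hypAngle p x y) = 1 - 2 * sin (hypAngle p x y / 2) ^ 2 := by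
    rw [← mul_div_cancel₀ (hypAngle p x y) two_ne_zero, cos_two_mul, cos_sq']
    ring_nf
  rw [cosh_dist_eq_sub_cos_hypAngle p x y, hcos, cosh_sub]
  ring

lemma sinh_half_dist_of_dist_eq (hx : dist p x = r) (hy : dist p y = r) :
    sinh (dist x y / 2) = sinh r * sin (hypAngle p x y / 2) := by
  have hr : 0 ≤ r := hx ▸ dist_nonneg
  have hlaw := cosh_dist_eq_add_sin_half_hypAngle p x y
  have hhalf : cosh (dist x y) = 1 + 2 * sinh (dist x y / 2) ^ 2 := by
    rw [← mul_div_cancel₀ (dist x y) two_ne_zero, cosh_two_mul, cosh_sq]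
    ring_nf
  rw [hhalf, hx, hy, sub_self, cosh_zero] at hlaw
  rw [← sq_eq_sq₀ (sinh_nonneg_iff.2 (by positivity))
    (mul_nonneg (sinh_nonneg_iff.2 hr) (sin_half_hypAngle_nonneg p x y))]
  linarith

lemma sq_sin_half_hypAngle_mul_sinh_le (p x y : X) :
    (sin (hypAngle p x y / 2) * sinh (dist p x + dist p y)) ^ 2 ≤
      sinh (dist p x) ^ 2 + sinh (dist p y) ^ 2 +
        2 * sinh (dist p x) * sinh (dist p y) * cosh (dist x y) := by
  have hlaw := cosh_dist_eq_add_sin_half_hypAngle p x y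
  set A := dist p x
  set B := dist p y
  set θ := hypAngle p x y
  have hlength : sinh A ^ 2 + sinh B ^ 2 + 2 * sinh A * sinh B * cosh (dist x y) =
      sinh (A + B) ^ 2 - (2 * sinh A * sinh B) ^ 2 * cos (θ / 2) ^ 2 := by
    rw [hlaw, cos_sq', ← sinh_sq_add_sinh_sq_add, cosh_add, cosh_sub]
    ring
  have hle : (2 * sinh A * sinh B) ^ 2 ≤ sinh (A + B) ^ 2 := by
    have : 0 ≤ sinh A := sinh_nonneg_iff.2 dist_nonneg
    have : 0 ≤ sinh B := sinh_nonneg_iff.2 dist_nonneg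
    gcongr
    exact two_mul_sinh_mul_sinh_le_sinh_add dist_nonneg dist_nonneg
  rw [hlength]
  nlinarith [mul_le_mul_of_nonneg_right hle (sq_nonneg (cos (θ / 2))), sin_sq_add_cos_sq (θ / 2)]

lemma compAngle_eq_two_mul_arcsin (hr : 0 < r) (hx : dist p x = r) (hy : dist p y = r) :
    compAngle p x y = 2 * arcsin (dist x y / (2 * r)) := by
  have htri : dist x y ≤ 2 * r := by
    linarith [dist_triangle_left x y p]
  rw [compAngle, ← arccos_one_sub_two_mul_sq (by positivity) ((div_le_one (by positivity)).2 htri),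
    hx, hy]
  congr 1
  field_simp
  ring

lemma angleAt_le_compAngle {u v : X} (hu : MetricBtw p u x) (hup : u ≠ p)
    (hv : MetricBtw p v y) (hvp : v ≠ p) : angleAt p x y ≤ compAngle p u v := by
  refine csInf_le ⟨0, ?_⟩ ⟨u, v, hu, hup, hv, hvp, rfl⟩
  rintro _ ⟨u, v, -, -, -, -, rfl⟩
  exact arccos_nonneg _

/-- The right-hand side of the `CAT(-1)` inequality, in the form of Stewart's theorem. -/
lemma sinh_dist_mul_cosh_sub_cos_hypAngle (x y z : X) (s : ℝ) :
    sinh (dist y z) * (cosh (dist x y) * cosh s -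
        sinh (dist x y) * sinh s * cos (hypAngle y x z)) =
      sinh (dist y z - s) * cosh (dist x y) + sinh s * cosh (dist x z) := by
  rw [cosh_dist_eq_sub_cos_hypAngle y x z, dist_comm y x, sinh_sub]
  ring

lemma CATminusOne.cosh_dist_le (hX : CATminusOne X) (x : X) (hγ : IsGeodesicSegBetween γ y z)
    (hs : s ∈ Icc 0 (dist y z)) :
    cosh (dist x (γ s)) ≤ cosh (dist x y) * cosh s -
      sinh (dist x y) * sinh s * cos (hypAngle y x z) := by
  rw [hypAngle, dist_comm y x]
  exact hX x y z γ hγ s hs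

lemma CATminusOne.sinh_mul_cosh_dist_le (hX : CATminusOne X) (x : X)
    (hγ : IsGeodesicSegBetween γ y z) (hs : s ∈ Icc 0 (dist y z)) :
    sinh (dist y z) * cosh (dist x (γ s)) ≤
      sinh (dist y z - s) * cosh (dist x y) + sinh s * cosh (dist x z) := by
  rw [← sinh_dist_mul_cosh_sub_cos_hypAngle]
  exact mul_le_mul_of_nonneg_left (hX.cosh_dist_le x hγ hs) (sinh_nonneg_iff.2 dist_nonneg)

lemma CATminusOne.hypAngle_apply_le (hX : CATminusOne X) (hγ : IsGeodesicSegBetween γ p x)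
    (hr : 0 < r) (hrx : r ≤ dist p x) (hy : y ≠ p) :
    hypAngle p (γ r) y ≤ hypAngle p x y := by
  have hcat := hX.cosh_dist_le y hγ ⟨hr.le, hrx⟩
  rw [dist_comm y, cosh_dist_eq_sub_cos_hypAngle p, hγ.dist_left ⟨hr.le, hrx⟩, dist_comm y,
    hypAngle_comm p y x] at hcat
  have hpos : 0 < sinh r * sinh (dist p y) :=
    mul_pos (sinh_pos_iff.2 hr) (sinh_pos_iff.2 (dist_pos.2 hy.symm))
  rw [← strictAntiOn_cos.le_iff_ge (hypAngle_mem_Icc ..) (hypAngle_mem_Icc ..)]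
  refine le_of_mul_le_mul_left ?_ hpos
  linarith

lemma CATminusOne.angleAt_le_two_mul_arcsin (hX : CATminusOne X) {γ₁ γ₂ : ℝ → X}
    (hγ₁ : IsGeodesicSegBetween γ₁ p x) (hγ₂ : IsGeodesicSegBetween γ₂ p y)
    (hr : 0 < r) (hrx : r ≤ dist p x) (hry : r ≤ dist p y) :
    angleAt p x y ≤ 2 * arcsin (sinh r / r * sin (hypAngle p x y / 2)) := by
  have hu : dist p (γ₁ r) = r := hγ₁.dist_left ⟨hr.le, hrx⟩
  have hv : dist p (γ₂ r) = r := hγ₂.dist_left ⟨hr.le, hry⟩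
  have hup : γ₁ r ≠ p := (dist_pos.1 (hu.symm ▸ hr)).symm
  have hvp : γ₂ r ≠ p := (dist_pos.1 (hv.symm ▸ hr)).symm
  have hyp : y ≠ p := (dist_pos.1 (hr.trans_le hry)).symm
  have hmono : hypAngle p (γ₁ r) (γ₂ r) ≤ hypAngle p x y :=
    calc hypAngle p (γ₁ r) (γ₂ r) = hypAngle p (γ₂ r) (γ₁ r) := hypAngle_comm ..
      _ ≤ hypAngle p y (γ₁ r) := hX.hypAngle_apply_le hγ₂ hr hry hup
      _ = hypAngle p (γ₁ r) y := hypAngle_comm ..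
      _ ≤ hypAngle p x y := hX.hypAngle_apply_le hγ₁ hr hrx hyp
  have hsin : sin (hypAngle p (γ₁ r) (γ₂ r) / 2) ≤ sin (hypAngle p x y / 2) :=
    sin_le_sin_of_le_of_le_pi_div_two
      (by linarith [pi_pos, (half_hypAngle_mem_Icc p (γ₁ r) (γ₂ r)).1])
      (half_hypAngle_mem_Icc p x y).2 (by linarith)
  have hchord : dist (γ₁ r) (γ₂ r) / 2 ≤ sinh r * sin (hypAngle p x y / 2) :=
    calc dist (γ₁ r) (γ₂ r) / 2 ≤ sinh (dist (γ₁ r) (γ₂ r) / 2) :=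
          self_le_sinh_iff.2 (by positivity)
      _ = sinh r * sin (hypAngle p (γ₁ r) (γ₂ r) / 2) := sinh_half_dist_of_dist_eq hu hv
      _ ≤ sinh r * sin (hypAngle p x y / 2) :=
          mul_le_mul_of_nonneg_left hsin (sinh_nonneg_iff.2 hr.le)
  calc angleAt p x y ≤ compAngle p (γ₁ r) (γ₂ r) :=
        angleAt_le_compAngle (hγ₁.metricBtw ⟨hr.le, hrx⟩) hup (hγ₂.metricBtw ⟨hr.le, hry⟩) hvp
    _ = 2 * arcsin (dist (γ₁ r) (γ₂ r) / (2 * r)) := compAngle_eq_two_mul_arcsin hr hu hv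
    _ ≤ 2 * arcsin (sinh r / r * sin (hypAngle p x y / 2)) := by
        gcongr
        rw [← div_div, div_mul_eq_mul_div]
        gcongr

open Filter Topology in
lemma CATminusOne.angleAt_le_hypAngle (hX : CATminusOne X) {γ₁ γ₂ : ℝ → X}
    (hγ₁ : IsGeodesicSegBetween γ₁ p x) (hγ₂ : IsGeodesicSegBetween γ₂ p y)
    (hx : x ≠ p) (hy : y ≠ p) : angleAt p x y ≤ hypAngle p x y := by
  set θ := hypAngle p x y
  have hlim : Tendsto (fun r => 2 * arcsin (sinh r / r * sin (θ / 2))) (𝓝[>] 0)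
      (𝓝 (2 * arcsin (1 * sin (θ / 2)))) :=
    (((tendsto_sinh_div_self.mono_left (nhdsGT_le_nhdsNE 0)).mul_const _).arcsin).const_mul 2
  have hθ := half_hypAngle_mem_Icc p x y
  rw [one_mul, arcsin_sin (by linarith [pi_pos, hθ.1]) hθ.2, mul_div_cancel₀ _ two_ne_zero] at hlim
  refine ge_of_tendsto hlim ?_
  filter_upwards [Ioc_mem_nhdsGT (lt_min (dist_pos.2 hx.symm) (dist_pos.2 hy.symm))] with r hr
  exact hX.angleAt_le_two_mul_arcsin hγ₁ hγ₂ hr.1 (hr.2.trans (min_le_left _ _))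
    (hr.2.trans (min_le_right _ _))

/-- The witness `γ s` is where the bisector at `p` of the comparison triangle meets the side
opposite `p`. -/
lemma CATminusOne.exists_cosh_dist_sq_mul_le (hX : CATminusOne X) (p : X)
    (hγ : IsGeodesicSegBetween γ x y) :
    ∃ s ∈ Icc 0 (dist x y), cosh (dist p (γ s)) ^ 2 * (sinh (dist p x) ^ 2 + sinh (dist p y) ^ 2 +
        2 * sinh (dist p x) * sinh (dist p y) * cosh (dist x y)) ≤
      sinh (dist p x + dist p y) ^ 2 := by
  rcases eq_or_ne x y with rfl | hxy
  · refine ⟨0, ⟨le_rfl, dist_nonneg⟩, le_of_eq ?_⟩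
    rw [hγ.1, dist_self, cosh_zero, sinh_add]
    ring
  set A := dist p x
  set B := dist p y
  set c := dist x y
  have hAB : 0 < A + B := (dist_pos.2 hxy).trans_le (dist_triangle_left x y p)
  have hA : A ≤ sinh A := self_le_sinh_iff.2 dist_nonneg
  have hB : B ≤ sinh B := self_le_sinh_iff.2 dist_nonneg
  obtain ⟨s, hs, k, hk, hsA, hsB⟩ := exists_sinh_eq_mul_and_sinh_sub_eq_mul (dist_pos.2 hxy)
    (dist_nonneg.trans hA) (dist_nonneg.trans hB) (by linarith)
  have hstewart : sinh c * cosh (dist p (γ s)) ≤ k * sinh (A + B) :=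
    calc sinh c * cosh (dist p (γ s)) ≤ sinh (c - s) * cosh A + sinh s * cosh B :=
          hX.sinh_mul_cosh_dist_le p hγ hs
      _ = k * sinh (A + B) := by
          rw [hsA, hsB, sinh_add]
          ring
  have hlength : k ^ 2 * (sinh A ^ 2 + sinh B ^ 2 + 2 * sinh A * sinh B * cosh c) = sinh c ^ 2 := by
    have h := sinh_sq_add_sinh_sq_add s (c - s)
    rw [add_sub_cancel, hsA, hsB] at h
    rw [← h]
    ring
  refine ⟨s, hs, le_of_mul_le_mul_left ?_ (pow_pos hk 2)⟩
  calc _ = (sinh c * cosh (dist p (γ s))) ^ 2 := by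
        rw [mul_pow, ← hlength]
        ring
    _ ≤ (k * sinh (A + B)) ^ 2 := by
        have : 0 ≤ sinh c := sinh_nonneg_iff.2 dist_nonneg
        gcongr
    _ = _ := mul_pow ..

lemma CATminusOne.exists_sin_half_hypAngle_le (hX : CATminusOne X)
    (hγ : IsGeodesicSegBetween γ x y) (hx : x ≠ p) :
    ∃ s ∈ Icc 0 (dist x y), sin (hypAngle p x y / 2) ≤ 1 / cosh (dist p (γ s)) := by
  obtain ⟨s, hs, hle⟩ := hX.exists_cosh_dist_sq_mul_le p hγ
  refine ⟨s, hs, ?_⟩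
  have hsinh : 0 < sinh (dist p x + dist p y) :=
    sinh_pos_iff.2 (add_pos_of_pos_of_nonneg (dist_pos.2 hx.symm) dist_nonneg)
  have hsq : (sin (hypAngle p x y / 2) * cosh (dist p (γ s)) *
      sinh (dist p x + dist p y)) ^ 2 ≤ sinh (dist p x + dist p y) ^ 2 :=
    calc _ = cosh (dist p (γ s)) ^ 2 *
          (sin (hypAngle p x y / 2) * sinh (dist p x + dist p y)) ^ 2 := by ring
      _ ≤ _ := mul_le_mul_of_nonneg_left (sq_sin_half_hypAngle_mul_sinh_le p x y) (sq_nonneg _)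
      _ ≤ _ := hle
  rw [le_div_iff₀ (cosh_pos _)]
  refine le_of_mul_le_mul_right ?_ hsinh
  rw [one_mul]
  exact le_of_abs_le (abs_le_of_sq_le_sq hsq hsinh.le)

lemma CATminusOne.hypAngle_le_of_far (hX : CATminusOne X) (hγ : IsGeodesicSegBetween γ x y)
    (hR : 0 < R) (hfar : ∀ s ∈ Icc 0 (dist x y), R ≤ dist p (γ s)) :
    hypAngle p x y ≤ 2 * arcsin (1 / cosh R) := by
  have hRx : R ≤ dist p x := by simpa only [hγ.1] using hfar 0 ⟨le_rfl, dist_nonneg⟩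
  obtain ⟨s, hs, hsin⟩ :=
    hX.exists_sin_half_hypAngle_le hγ (dist_pos.1 (hR.trans_le hRx)).symm
  have hcosh : cosh R ≤ cosh (dist p (γ s)) :=
    cosh_strictMonoOn.monotoneOn hR.le dist_nonneg (hfar s hs)
  have hθ := half_hypAngle_mem_Icc p x y
  have hhalf : hypAngle p x y / 2 ≤ arcsin (1 / cosh R) :=
    (le_arcsin_iff_sin_le' ⟨by linarith [pi_pos, hθ.1], hθ.2⟩).2
      (hsin.trans (one_div_le_one_div_of_le (cosh_pos R) hcosh))
  linarith

theorem angle_le_of_far_general (hgeod : GeodesicSpace X) (hX : CATminusOne X) (p : X)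
    (σ : ℝ → X) (a b R : ℝ) (hR : 0 < R) (hgeo : IsGeodesicOn σ a b)
    (hfar : ∀ t ∈ Icc a b, R ≤ dist p (σ t)) :
    angleAt p (σ a) (σ b) ≤ 2 * arcsin (1 / cosh R) := by
  obtain ⟨γ₁, hγ₁⟩ := hgeod p (σ a)
  obtain ⟨γ₂, hγ₂⟩ := hgeod p (σ b)
  have hne : ∀ t ∈ Icc a b, σ t ≠ p := fun t ht =>
    (dist_pos.1 (hR.trans_le (hfar t ht))).symm
  calc angleAt p (σ a) (σ b) ≤ hypAngle p (σ a) (σ b) :=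
        hX.angleAt_le_hypAngle hγ₁ hγ₂ (hne a ⟨le_rfl, hgeo.1⟩) (hne b ⟨hgeo.1, le_rfl⟩)
    _ ≤ 2 * arcsin (1 / cosh R) := by
        refine hX.hypAngle_le_of_far hgeo.isGeodesicSegBetween hR fun s hs => hfar _ ?_
        rw [hgeo.dist_endpoints] at hs
        exact ⟨by linarith [hs.1], by linarith [hs.2]⟩

end MetricSpace

section HyperbolicPlane

open Real UpperHalfPlane

/-- In the hyperboloid model `z` is `(1 / N) • (α • x + β • y)`. -/
lemma exists_forall_mul_cosh_dist_eq (x y : ℍ) {α β N : ℝ} (hα : 0 ≤ α) (hβ : 0 ≤ β) (hN : 0 < N)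
    (hsq : α ^ 2 + β ^ 2 + 2 * α * β * cosh (dist x y) = N ^ 2) :
    ∃ z : ℍ, ∀ p : ℍ, N * cosh (dist p z) = α * cosh (dist p x) + β * cosh (dist p y) := by
  have hx := x.im_pos
  have hy := y.im_pos
  have hw : 0 < α * y.im + β * x.im := by
    have hαβ : α ≠ 0 ∨ β ≠ 0 := by
      by_contra! h
      exact (pow_pos hN 2).ne (by simpa [h] using hsq)
    rcases hαβ with h | h
    · exact add_pos_of_pos_of_nonneg (mul_pos (hα.lt_of_ne' h) hy) (by positivity)
    · exact add_pos_of_nonneg_of_pos (by positivity) (mul_pos (hβ.lt_of_ne' h) hx)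
  let z : ℍ := ⟨⟨(α * x.re * y.im + β * y.re * x.im) / (α * y.im + β * x.im),
    N * x.im * y.im / (α * y.im + β * x.im)⟩, by positivity⟩
  have hzre : z.re = (α * x.re * y.im + β * y.re * x.im) / (α * y.im + β * x.im) := rfl
  have hzim : z.im = N * x.im * y.im / (α * y.im + β * x.im) := rfl
  refine ⟨z, fun p => ?_⟩
  have hp := p.im_pos
  rw [cosh_dist'] at hsq
  simp only [cosh_dist', hzre, hzim]
  field_simp at hsq ⊢
  linear_combination (-(x.im * y.im)) * hsq

lemma exists_forall_sinh_mul_cosh_dist_eq {x y : ℍ} (hxy : x ≠ y) {s : ℝ}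
    (hs : s ∈ Icc 0 (dist x y)) :
    ∃ z : ℍ, ∀ p : ℍ, sinh (dist x y) * cosh (dist p z) =
      sinh (dist x y - s) * cosh (dist p x) + sinh s * cosh (dist p y) := by
  refine exists_forall_mul_cosh_dist_eq x y (sinh_nonneg_iff.2 (sub_nonneg.2 hs.2))
    (sinh_nonneg_iff.2 hs.1) (sinh_pos_iff.2 (dist_pos.2 hxy)) ?_
  simpa only [sub_add_cancel] using sinh_sq_add_sinh_sq_add (dist x y - s) s

lemma geodesicSpace_upperHalfPlane : GeodesicSpace ℍ := by
  intro x y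
  rcases eq_or_ne x y with rfl | hxy
  · refine ⟨fun _ => x, rfl, rfl, fun s hs t ht => ?_⟩
    rw [dist_self, Icc_self, mem_singleton_iff] at hs ht
    simp [hs, ht]
  choose! γ hγ using fun s (hs : s ∈ Icc 0 (dist x y)) => exists_forall_sinh_mul_cosh_dist_eq hxy hs
  have hsinh : sinh (dist x y) ≠ 0 := (sinh_pos_iff.2 (dist_pos.2 hxy)).ne'
  have hdist : ∀ {p : ℍ} {s t : ℝ}, s ∈ Icc 0 (dist x y) → dist p x = t →
      dist p y = dist x y - t → dist p (γ s) = |s - t| := by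
    intro p s t hs hpx hpy
    refine cosh_injOn dist_nonneg (mem_Ici.2 (abs_nonneg _)) (mul_left_cancel₀ hsinh ?_)
    rw [hγ s hs p, hpx, hpy, cosh_abs, sinh_mul_cosh_sub _ s t]
  have hleft : ∀ s ∈ Icc 0 (dist x y), dist x (γ s) = s := fun s hs => by
    rw [hdist hs (dist_self x) (sub_zero _).symm, sub_zero, abs_of_nonneg hs.1]
  have hright : ∀ s ∈ Icc 0 (dist x y), dist y (γ s) = dist x y - s := fun s hs => by
    rw [hdist hs (dist_comm y x) (by rw [dist_self, sub_self]), abs_sub_comm,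
      abs_of_nonneg (sub_nonneg.2 hs.2)]
  refine ⟨γ, ?_, ?_, fun s hs t ht => ?_⟩
  · exact (dist_eq_zero.1 (hleft 0 ⟨le_rfl, dist_nonneg⟩)).symm
  · exact (dist_eq_zero.1 ((hright _ ⟨dist_nonneg, le_rfl⟩).trans (sub_self _))).symm
  · rw [dist_comm, hdist hs (by rw [dist_comm, hleft t ht]) (by rw [dist_comm, hright t ht])]

lemma sinh_mul_cosh_dist_of_metricBtw {x y z : ℍ} (hz : MetricBtw x z y) (p : ℍ) :
    sinh (dist x y) * cosh (dist p z) =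
      sinh (dist z y) * cosh (dist p x) + sinh (dist x z) * cosh (dist p y) := by
  have hzy : dist z y = dist x y - dist x z := eq_sub_of_add_eq' hz
  rcases eq_or_ne x y with rfl | hxy
  · have hxz : dist x z = 0 := by linarith [dist_comm x z, dist_self x]
    simp [dist_comm z x, hxz]
  have hxz : dist x z ∈ Icc 0 (dist x y) :=
    ⟨dist_nonneg, by linarith [dist_nonneg (x := z) (y := y)]⟩
  obtain ⟨w, hw⟩ := exists_forall_sinh_mul_cosh_dist_eq hxy hxz
  have hzw : dist z w = 0 := by
    refine cosh_injOn dist_nonneg self_mem_Ici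
      (mul_left_cancel₀ (sinh_pos_iff.2 (dist_pos.2 hxy)).ne' ?_)
    rw [hw z, hzy, dist_comm z x, ← sinh_mul_cosh_sub, sub_self]
  rw [dist_eq_zero.1 hzw, hw p, ← hzy, dist_eq_zero.1 hzw]

lemma catMinusOne_upperHalfPlane : CATminusOne ℍ := by
  intro x y z γ hγ s hs
  rcases eq_or_ne y z with rfl | hyz
  · have hs₀ : s = 0 := by simpa using hs
    simp [hs₀, hγ.1]
  · have hstewart := sinh_mul_cosh_dist_of_metricBtw (hγ.metricBtw hs) x
    rw [hγ.dist_left hs, hγ.dist_right hs, ← sinh_dist_mul_cosh_sub_cos_hypAngle, hypAngle,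
      dist_comm y x] at hstewart
    exact (mul_left_cancel₀ (sinh_pos_iff.2 (dist_pos.2 hyz)).ne' hstewart).le

end HyperbolicPlane

/-- **Visibility estimate in the hyperbolic plane**: a geodesic segment at
distance at least `R` from `p` subtends an angle at most `π / (cosh R - 1)`
at `p`. -/
theorem angle_le_of_far (p : UpperHalfPlane) (σ : ℝ → UpperHalfPlane)
    (a b R : ℝ) (hR : 0 < R) (hgeo : IsGeodesicOn σ a b)
    (hfar : ∀ t ∈ Icc a b, R ≤ dist p (σ t)) :
    angleAt p (σ a) (σ b) ≤ Real.pi / (Real.cosh R - 1) :=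
  (angle_le_of_far_general geodesicSpace_upperHalfPlane catMinusOne_upperHalfPlane p σ a b R hR
    hgeo hfar).trans (two_mul_arcsin_one_div_cosh_le hR.ne')
end
end

section
/- Preissman-type theorem: if M is a closed Riemannian manifold of nonpositive curvature whose universal cover contains no totally geodesic flat plane (i.e., M is a visibility manifold), then π₁(M) contains no subgroup isomorphic to ℤ ⊕ ℤ. -/
/-!
STATEMENT 18: Preissman-type theorem: if `M` is a closed Riemannian manifold of
nonpositive curvature whose universal cover contains no totally geodesic flat
plane (i.e. `M` is a visibility manifold), then `π₁(M)` contains no subgroup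
isomorphic to `ℤ ⊕ ℤ`.

The universal cover of a closed nonpositively curved manifold is a complete,
simply connected space of nonpositive curvature on which `π₁(M)` acts freely,
properly discontinuously and cocompactly by isometries.  Mathlib has no
Riemannian curvature, so we formalize `M` through this data: `X` is a complete
geodesic CAT(0) space (≡ Hadamard manifold, in the smooth case), a totally
geodesic flat plane is an isometrically embedded `ℝ²`, and the conclusion is
that the deck group `Γ ≅ π₁(M)` has no subgroup isomorphic to `ℤ ⊕ ℤ`.
-/
open Set

noncomputable section

variable {X : Type*}

open Set

/-!
A group `A ≅ ℤⁿ` of deck transformations forces a flat `ℝⁿ` in `X`. By cocompactness some point `p`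
minimises the total displacement of a basis of `A`, and convexity puts `p` on an axis of every
element of `A`. For commuting isometries with `p` on their axes, the CAT(0) quadrilateral inequality
becomes the parallelogram law, so `a ↦ dist p (a p) ^ 2` is a quadratic form. By proper
discontinuity it is positive definite, and hence the orbit map is an isometric embedding of a
lattice of `ℝⁿ`.

The embedding extends to `ℝⁿ` by taking midpoints and limits. It stays isometric because the orbit
is symmetric about `p`: a shortcut between two points of the image would shorten the detour from
`a p` to `a⁻¹ p` through them, for `a` far out in a suitable direction.
-/

section Midpoints

variable [MetricSpace X]

/-- `m` is a midpoint of `x` and `y` in the sense of Bruhat and Tits: the distance from any point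
`z` to `m` is at most the length of the median in the Euclidean triangle with the sides of
`z x y`. -/
def IsCATMidpoint (x y m : X) : Prop :=
  ∀ z, dist z m ^ 2 ≤ (dist z x ^ 2 + dist z y ^ 2) / 2 - dist x y ^ 2 / 4

/-- Nonpositive curvature in the form of Bruhat and Tits: a CAT(0) inequality for midpoints, with no
reference to geodesics. -/
def HasCATMidpoints (X : Type*) [MetricSpace X] : Prop :=
  ∀ x y : X, ∃ m, IsCATMidpoint x y m

theorem CATzero.hasCATMidpoints (hcat : CATzero X) (hgeo : GeodesicSpace X) :
    HasCATMidpoints X := by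
  intro x y
  rcases eq_or_ne x y with rfl | hxy
  · exact ⟨x, fun z => by simp⟩
  obtain ⟨γ, hγ⟩ := hgeo x y
  have hd : 0 < dist x y := dist_pos.mpr hxy
  refine ⟨γ (dist x y / 2), fun z => ?_⟩
  have h := hcat z x y γ hγ (dist x y / 2) ⟨by positivity, by linarith⟩
  rw [div_div_cancel_left' hd.ne'] at h
  linarith

variable {x y y' m n : X}

namespace IsCATMidpoint

theorem symm (h : IsCATMidpoint x y m) : IsCATMidpoint y x m := fun z => by
  rw [dist_comm y x, add_comm]
  exact h z

theorem map (h : IsCATMidpoint x y m) (g : X ≃ᵢ X) : IsCATMidpoint (g x) (g y) (g m) := by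
  intro z
  obtain ⟨w, rfl⟩ := g.surjective z
  simpa only [g.dist_eq] using h w

theorem dist_left_le (h : IsCATMidpoint x y m) : dist x m ≤ dist x y / 2 := by
  refine le_of_sq_le_sq ?_ (by positivity)
  have hx := h x
  rw [dist_self] at hx
  linarith

theorem dist_right_le (h : IsCATMidpoint x y m) : dist m y ≤ dist x y / 2 := by
  simpa only [dist_comm] using h.symm.dist_left_le

theorem dist_le_of_common_vertex (hm : IsCATMidpoint x y m) (hn : IsCATMidpoint x y' n) :
    dist m n ≤ dist y y' / 2 := by
  have hmn := hn m
  have hmy' := hm y'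
  have hmx : dist x m ^ 2 ≤ (dist x y / 2) ^ 2 := by gcongr; exact hm.dist_left_le
  rw [dist_comm m x] at hmn
  rw [dist_comm y' m, dist_comm y' x, dist_comm y' y] at hmy'
  exact le_of_sq_le_sq (by linarith) (by positivity)

end IsCATMidpoint

namespace HasCATMidpoints

variable (hX : HasCATMidpoints X)
include hX

theorem isCATMidpoint_of_dist_le (hx : dist m x ≤ dist x y / 2) (hy : dist m y ≤ dist x y / 2) :
    IsCATMidpoint x y m := by
  obtain ⟨c, hc⟩ := hX x y
  have hsq : dist m c ^ 2 ≤ 0 := by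
    have hx2 : dist m x ^ 2 ≤ (dist x y / 2) ^ 2 := by gcongr
    have hy2 : dist m y ^ 2 ≤ (dist x y / 2) ^ 2 := by gcongr
    linarith [hc m]
  obtain rfl : m = c := dist_eq_zero.mp (sq_nonpos_iff _ |>.mp hsq)
  exact hc

theorem dist_midpoint_le {x' : X} (hm : IsCATMidpoint x y m) (hn : IsCATMidpoint x' y' n) :
    dist m n ≤ dist x x' / 2 + dist y y' / 2 := by
  obtain ⟨c, hc⟩ := hX x y'
  linarith [dist_triangle m c n, hm.dist_le_of_common_vertex hc,
    hc.symm.dist_le_of_common_vertex hn.symm]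

theorem quadrilateral (p q r s : X) : dist p r ^ 2 + dist q s ^ 2 ≤
    dist p q ^ 2 + dist q r ^ 2 + dist r s ^ 2 + dist s p ^ 2 := by
  obtain ⟨m, hm⟩ := hX p r
  have hq := hm q
  have hs := hm s
  rw [dist_comm q p] at hq
  rw [dist_comm s r] at hs
  have hqs : dist q s ^ 2 ≤ 2 * (dist q m ^ 2 + dist s m ^ 2) :=
    calc dist q s ^ 2 ≤ (dist q m + dist s m) ^ 2 := by gcongr; exact dist_triangle_right q s m
      _ ≤ 2 * (dist q m ^ 2 + dist s m ^ 2) := add_sq_le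
  linarith

end HasCATMidpoints

end Midpoints

section Axes

variable [MetricSpace X] {g h : X ≃ᵢ X} {p : X}

/-- The points `p`, `g p`, `g (g p)` are equally spaced on a geodesic. In a CAT(0) space this says
that `p` lies on an axis of `g` or is fixed by `g`. -/
def OnAxis (g : X ≃ᵢ X) (p : X) : Prop :=
  dist p (g (g p)) = 2 * dist p (g p)

theorem OnAxis.one (p : X) : OnAxis (1 : X ≃ᵢ X) p := by
  simp [OnAxis]

theorem dist_inv_apply (g : X ≃ᵢ X) (p : X) : dist p (g⁻¹ p) = dist p (g p) := by
  rw [← g.dist_eq, IsometryEquiv.apply_inv_self, dist_comm]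

theorem OnAxis.inv (hg : OnAxis g p) : OnAxis g⁻¹ p := by
  have h2 : dist p (g⁻¹ (g⁻¹ p)) = dist p (g (g p)) := by
    simpa only [mul_inv_rev, IsometryEquiv.mul_apply] using dist_inv_apply (g * g) p
  rw [OnAxis, h2, dist_inv_apply]
  exact hg

theorem dist_apply_apply_le (g : X ≃ᵢ X) (p : X) : dist p (g (g p)) ≤ 2 * dist p (g p) := by
  have := dist_triangle p (g p) (g (g p))
  rw [g.dist_eq] at this
  linarith

namespace HasCATMidpoints

variable (hX : HasCATMidpoints X)
include hX

theorem onAxis_mul_self (hg : OnAxis g p) : OnAxis (g * g) p := by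
  set c := dist p (g p) with hc
  have h2 : dist p (g (g p)) = 2 * c := hg
  have hmid : IsCATMidpoint p (g (g p)) (g p) := hX.isCATMidpoint_of_dist_le
    (by rw [hg, dist_comm]; linarith) (by rw [hg, g.dist_eq]; linarith)
  have hmid₂ := hmid.map g p
  have hmid₃ := (hmid.map g).map g p
  simp only [g.dist_eq, h2] at hmid₂ hmid₃
  rw [← hc] at hmid₂
  have h3 : dist p (g (g (g p))) ^ 2 ≤ (3 * c) ^ 2 := by
    gcongr
    have := dist_triangle p (g p) (g (g (g p)))
    rw [g.dist_eq, h2] at this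
    linarith
  refine le_antisymm (dist_apply_apply_le _ _) ?_
  simp only [IsometryEquiv.mul_apply, h2]
  exact le_of_sq_le_sq (by linarith [h3]) dist_nonneg

theorem parallelogram_le (hgh : Commute g h) (p : X) :
    dist p ((g * h) p) ^ 2 + dist p ((g * h⁻¹) p) ^ 2 ≤
      2 * dist p (g p) ^ 2 + 2 * dist p (h p) ^ 2 := by
  have hdiag : dist p ((g * h⁻¹) p) = dist (h p) (g p) := by
    rw [hgh.inv_right.eq, ← h.dist_eq, ← IsometryEquiv.mul_apply, mul_inv_cancel_left]
  have hside : dist (h p) ((g * h) p) = dist p (g p) := by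
    rw [hgh.eq, IsometryEquiv.mul_apply, h.dist_eq]
  have := hX.quadrilateral p (h p) ((g * h) p) (g p)
  rw [hside, IsometryEquiv.mul_apply, g.dist_eq, dist_comm (h p) p, dist_comm (g p) p] at this
  rw [hdiag, IsometryEquiv.mul_apply]
  linarith

-- The inequality for `g * h` and `g * h⁻¹`, whose product and quotient are `g ^ 2` and `h ^ 2`,
-- is the reverse of the inequality for `g` and `h`.
theorem parallelogram_eq (hgh : Commute g h) (hg : OnAxis g p) (hh : OnAxis h p) :
    dist p ((g * h) p) ^ 2 + dist p ((g * h⁻¹) p) ^ 2 =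
      2 * dist p (g p) ^ 2 + 2 * dist p (h p) ^ 2 := by
  refine le_antisymm (hX.parallelogram_le hgh p) ?_
  have hcomm : Commute (g * h) (g * h⁻¹) :=
    ((Commute.refl g).mul_right hgh.inv_right).mul_left
      (hgh.symm.mul_right (Commute.refl h).inv_right)
  have hprod : g * h * (g * h⁻¹) = g * g := by
    rw [hgh.symm.mul_mul_mul_comm, mul_inv_cancel, mul_one]
  have hquot : g * h * (g * h⁻¹)⁻¹ = h * h := by
    rw [hgh.eq, mul_inv_rev, inv_inv, hgh.inv_left.symm.eq, mul_assoc, mul_inv_cancel_left]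
  have := hX.parallelogram_le hcomm p
  rw [hprod, hquot, IsometryEquiv.mul_apply, IsometryEquiv.mul_apply, hg, hh] at this
  linarith

theorem onAxis_mul (hgh : Commute g h) (hg : OnAxis g p) (hh : OnAxis h p) :
    OnAxis (g * h) p := by
  have hsq := hX.parallelogram_eq ((hgh.mul_left hgh).mul_right (hgh.mul_left hgh))
    (hX.onAxis_mul_self hg) (hX.onAxis_mul_self hh)
  have hmul : g * g * (h * h) = g * h * (g * h) := hgh.mul_mul_mul_comm g h
  have hdiv : g * g * (h * h)⁻¹ = g * h⁻¹ * (g * h⁻¹) := by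
    rw [mul_inv_rev, hgh.inv_right.mul_mul_mul_comm]
  have hle : dist p ((g * h⁻¹ * (g * h⁻¹)) p) ^ 2 ≤ (2 * dist p ((g * h⁻¹) p)) ^ 2 := by
    gcongr
    exact dist_apply_apply_le (g * h⁻¹) p
  refine le_antisymm (dist_apply_apply_le _ _) (le_of_sq_le_sq ?_ dist_nonneg)
  rw [hmul, hdiv, IsometryEquiv.mul_apply g g, IsometryEquiv.mul_apply h h, hg, hh] at hsq
  rw [← IsometryEquiv.mul_apply]
  linarith [hX.parallelogram_eq hgh hg hh]

/-- The elements of an abelian group of isometries that have `p` on an axis. -/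
def axisSubgroup {A : Type*} [CommGroup A] (ρ : A →* X ≃ᵢ X) (p : X) : Subgroup A where
  carrier := {a | OnAxis (ρ a) p}
  mul_mem' {a b} ha hb := by
    rw [mem_ofPred_eq, map_mul]
    exact hX.onAxis_mul ((Commute.all a b).map ρ) ha hb
  one_mem' := by
    rw [mem_ofPred_eq, map_one]
    exact OnAxis.one p
  inv_mem' {a} ha := by
    rw [mem_ofPred_eq, map_inv]
    exact OnAxis.inv ha

theorem onAxis_of_forall_single {ι : Type*} [Finite ι] [DecidableEq ι]
    {ρ : Multiplicative (ι → ℤ) →* X ≃ᵢ X}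
    (hp : ∀ i, OnAxis (ρ (.ofAdd (Pi.single i 1))) p) (a : Multiplicative (ι → ℤ)) :
    OnAxis (ρ a) p := by
  have := Fintype.ofFinite ι
  have ha : a = ∏ i, Multiplicative.ofAdd (Pi.single i (1 : ℤ)) ^ a.toAdd i := by
    simp only [← ofAdd_zsmul, ← ofAdd_sum, ← Pi.single_smul, smul_eq_mul, mul_one,
      Finset.univ_sum_single, ofAdd_toAdd]
  have : a ∈ hX.axisSubgroup ρ p := by
    rw [ha]
    exact Subgroup.prod_mem _ fun i _ => Subgroup.zpow_mem _ (hp i) _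
  exact this

-- Replacing `p` by the midpoint of `p` and `a i p` increases no displacement, and decreases that of
-- `a i` unless `p` is already on an axis of `a i`.
theorem onAxis_of_forall_sum_dist_le {ι : Type*} [Fintype ι] {a : ι → X ≃ᵢ X}
    (hcomm : ∀ i j, Commute (a i) (a j))
    (hp : ∀ y, ∑ i, dist p (a i p) ≤ ∑ i, dist y (a i y)) (i : ι) : OnAxis (a i) p := by
  obtain ⟨m, hm⟩ := hX p (a i p)
  have hle (j : ι) : dist m (a j m) ≤ dist p (a j p) := by
    have := hX.dist_midpoint_le hm (hm.map (a j))
    rw [← IsometryEquiv.mul_apply (a j), (hcomm j i).eq, IsometryEquiv.mul_apply,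
      (a i).dist_eq] at this
    linarith
  refine le_antisymm (dist_apply_apply_le _ _) (not_lt.mp fun hlt => ?_)
  have hlt_i : dist m (a i m) < dist p (a i p) := by
    linarith [hm.symm.dist_le_of_common_vertex (hm.map (a i))]
  exact (hp m).not_gt (Finset.sum_lt_sum (fun j _ => hle j) ⟨i, Finset.mem_univ i, hlt_i⟩)

end HasCATMidpoints

end Axes

section CocompactActions

variable [MetricSpace X] {Γ : Subgroup (X ≃ᵢ X)}

/-- Proper discontinuity: every point has a neighbourhood meeting only finitely many of its
translates under `Γ`. -/
def ActsProperly (Γ : Subgroup (X ≃ᵢ X)) : Prop :=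
  ∀ x : X, ∃ V : Set X, IsOpen V ∧ x ∈ V ∧
    Set.Finite {γ : X ≃ᵢ X | γ ∈ Γ ∧ ((⇑γ) '' V ∩ V).Nonempty}

/-- Cocompactness: the translates of some compact set under `Γ` cover the space. -/
def ActsCocompactly (Γ : Subgroup (X ≃ᵢ X)) : Prop :=
  ∃ K : Set X, IsCompact K ∧ (⋃ γ ∈ Γ, (⇑γ) '' K) = univ

/-- The elements of `Γ` that carry `y` to within distance `R` of `x` for some `(x, y) ∈ W`. -/
def coarseTransporter (Γ : Subgroup (X ≃ᵢ X)) (W : Set (X × X)) (R : ℝ) : Set (X ≃ᵢ X) :=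
  {γ | γ ∈ Γ ∧ ∃ w ∈ W, dist w.1 (γ w.2) ≤ R}

theorem coarseTransporter_mono {W W' : Set (X × X)} {R R' : ℝ} (hW : W ⊆ W') (hR : R ≤ R') :
    coarseTransporter Γ W R ⊆ coarseTransporter Γ W' R' :=
  fun _ ⟨hγ, w, hw, h⟩ => ⟨hγ, w, hW hw, h.trans hR⟩

theorem dist_apply_inv_mul (g h : X ≃ᵢ X) (x y : X) : dist x ((g⁻¹ * h) y) = dist (g x) (h y) := by
  rw [← g.dist_eq, ← IsometryEquiv.mul_apply, mul_inv_cancel_left]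

theorem dist_apply_conj (g h : X ≃ᵢ X) (x : X) :
    dist x ((g⁻¹ * h * g) x) = dist (g x) (h (g x)) := by
  rw [mul_assoc, dist_apply_inv_mul, IsometryEquiv.mul_apply]

theorem ActsProperly.exists_finite_coarseTransporter_singleton (hΓ : ActsProperly Γ) (x y : X) :
    ∃ r > 0, (coarseTransporter Γ {(x, y)} r).Finite := by
  obtain ⟨V, hV, hyV, hfin⟩ := hΓ y
  obtain ⟨r, hr, hrV⟩ := Metric.isOpen_iff.mp hV y hyV
  refine ⟨r / 3, by positivity, ?_⟩
  rcases (coarseTransporter Γ {(x, y)} (r / 3)).eq_empty_or_nonempty with h | ⟨g, hgΓ, _, rfl, hg⟩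
  · rw [h]
    exact finite_empty
  refine (hfin.image (g * ·)).subset ?_
  rintro h ⟨hhΓ, _, rfl, hh⟩
  refine ⟨g⁻¹ * h, ⟨Γ.mul_mem (Γ.inv_mem hgΓ) hhΓ, (g⁻¹ * h) y, ⟨y, hyV, rfl⟩, hrV ?_⟩,
    mul_inv_cancel_left g h⟩
  rw [Metric.mem_ball, dist_comm, dist_apply_inv_mul]
  linarith [dist_triangle_left (g y) (h y) x]

theorem ActsProperly.exists_finite_coarseTransporter (hΓ : ActsProperly Γ) {W : Set (X × X)}
    (hW : IsCompact W) : ∃ r > 0, (coarseTransporter Γ W r).Finite := by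
  refine hW.induction_on (p := fun W => ∃ r > 0, (coarseTransporter Γ W r).Finite) ?_ ?_ ?_ ?_
  · exact ⟨1, one_pos, by simp [coarseTransporter]⟩
  · exact fun s t hst ⟨r, hr, hfin⟩ => ⟨r, hr, hfin.subset (coarseTransporter_mono hst le_rfl)⟩
  · rintro s t ⟨r, hr, hs⟩ ⟨r', hr', ht⟩
    refine ⟨min r r', lt_min hr hr', (hs.union ht).subset ?_⟩
    rintro γ ⟨hγ, w, hw | hw, h⟩
    · exact Or.inl ⟨hγ, w, hw, h.trans (min_le_left _ _)⟩
    · exact Or.inr ⟨hγ, w, hw, h.trans (min_le_right _ _)⟩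
  · rintro ⟨x, y⟩ -
    obtain ⟨r, hr, hfin⟩ := hΓ.exists_finite_coarseTransporter_singleton x y
    have hr3 : 0 < r / 3 := by positivity
    refine ⟨Metric.ball x (r / 3) ×ˢ Metric.ball y (r / 3), mem_nhdsWithin_of_mem_nhds
      (prod_mem_nhds (Metric.ball_mem_nhds _ hr3) (Metric.ball_mem_nhds _ hr3)),
      r / 3, hr3, hfin.subset ?_⟩
    rintro γ ⟨hγ, ⟨k, k'⟩, ⟨hk, hk'⟩, h⟩
    refine ⟨hγ, (x, y), rfl, ?_⟩
    have := dist_triangle4_right x (γ y) k (γ k')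
    rw [γ.dist_eq, dist_comm y k'] at this
    rw [Metric.mem_ball, dist_comm] at hk
    rw [Metric.mem_ball] at hk'
    dsimp only at h ⊢
    linarith

theorem exists_apply_eq_of_iUnion_image_eq_univ {K : Set X} (hK : (⋃ γ ∈ Γ, (⇑γ) '' K) = univ)
    (x : X) : ∃ γ ∈ Γ, ∃ k ∈ K, γ k = x := by
  have hx : x ∈ ⋃ γ ∈ Γ, (⇑γ) '' K := hK.symm ▸ mem_univ x
  simpa only [mem_iUnion, exists_prop, mem_image] using hx

theorem HasCATMidpoints.finite_coarseTransporter_two_mul (hX : HasCATMidpoints X) {K : Set X}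
    (hcov : (⋃ γ ∈ Γ, (⇑γ) '' K) = univ) {R : ℝ} (hfin : (coarseTransporter Γ (K ×ˢ K) R).Finite) :
    (coarseTransporter Γ (K ×ˢ K) (2 * R)).Finite := by
  refine (hfin.mul hfin).subset ?_
  rintro γ ⟨hγ, ⟨k, k'⟩, ⟨hk, hk'⟩, h⟩
  dsimp only at hk hk' h
  obtain ⟨m, hm⟩ := hX k (γ k')
  obtain ⟨g, hg, l, hl, rfl⟩ := exists_apply_eq_of_iUnion_image_eq_univ hcov m
  refine mem_mul.mpr ⟨g, ⟨hg, (k, l), ⟨hk, hl⟩, ?_⟩, g⁻¹ * γ,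
    ⟨Γ.mul_mem (Γ.inv_mem hg) hγ, (l, k'), ⟨hl, hk'⟩, ?_⟩, mul_inv_cancel_left g γ⟩
  · linarith [hm.dist_left_le]
  · rw [dist_apply_inv_mul]
    linarith [hm.dist_right_le]

namespace ActsCocompactly

theorem exists_isCompact_superset (hc : ActsCocompactly Γ) {L : Set X} (hL : IsCompact L) :
    ∃ K, L ⊆ K ∧ IsCompact K ∧ (⋃ γ ∈ Γ, (⇑γ) '' K) = univ := by
  obtain ⟨K, hK, hcov⟩ := hc
  refine ⟨L ∪ K, subset_union_left, hL.union hK, eq_univ_of_univ_subset ?_⟩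
  rw [← hcov]
  gcongr
  exact subset_union_right

variable (hX : HasCATMidpoints X) (hΓ : ActsProperly Γ) (hc : ActsCocompactly Γ)
include hX hΓ hc

-- Midpoints spread the finiteness from one small scale to all scales by repeated doubling.
theorem finite_coarseTransporter {L : Set X} (hL : IsCompact L) (R : ℝ) :
    (coarseTransporter Γ (L ×ˢ L) R).Finite := by
  obtain ⟨K, hLK, hK, hcov⟩ := hc.exists_isCompact_superset hL
  obtain ⟨r, hr, hfin⟩ := hΓ.exists_finite_coarseTransporter (hK.prod hK)
  have hdouble (n : ℕ) : (coarseTransporter Γ (K ×ˢ K) (2 ^ n * r)).Finite := by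
    induction n with
    | zero => simpa only [pow_zero, one_mul] using hfin
    | succ n ih =>
      rw [pow_succ', mul_assoc]
      exact hX.finite_coarseTransporter_two_mul hcov ih
  obtain ⟨n, hn⟩ := pow_unbounded_of_one_lt (R / r) (one_lt_two (α := ℝ))
  exact (hdouble n).subset
    (coarseTransporter_mono (prod_mono hLK hLK) ((div_lt_iff₀ hr).mp hn).le)

theorem finite_dist_apply_le (p : X) (R : ℝ) : {γ | γ ∈ Γ ∧ dist p (γ p) ≤ R}.Finite :=
  (finite_coarseTransporter hX hΓ hc (isCompact_singleton (x := p)) R).subset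
    fun _ ⟨hγ, h⟩ => ⟨hγ, (p, p), ⟨rfl, rfl⟩, h⟩

theorem properSpace : ProperSpace X where
  isCompact_closedBall x R := by
    obtain ⟨K, hxK, hK, hcov⟩ := hc.exists_isCompact_superset (isCompact_singleton (x := x))
    have hfin := finite_coarseTransporter hX hΓ hc hK R
    refine (hfin.isCompact_biUnion fun γ _ => hK.image γ.continuous).of_isClosed_subset
      Metric.isClosed_closedBall fun y hy => ?_
    obtain ⟨γ, hγ, k, hk, rfl⟩ := exists_apply_eq_of_iUnion_image_eq_univ hcov y
    refine mem_iUnion₂.mpr ⟨γ, ⟨hγ, (x, k), ⟨hxK rfl, hk⟩, ?_⟩, k, hk, rfl⟩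
    rw [dist_comm]
    exact hy

variable {ι : Type*} {a : ι → X ≃ᵢ X} (ha : ∀ i, a i ∈ Γ)
include ha

-- Moving `y` into `K` by an element `g` of `Γ` replaces the `a i` by their conjugates under `g`;
-- these displace a point of `K` by at most `R`, so only finitely many tuples of conjugates occur.
theorem exists_isCompact_forall_dist_eq [Finite ι] (R : ℝ) :
    ∃ C : Set X, IsCompact C ∧ ∀ y, (∀ i, dist y (a i y) ≤ R) →
      ∃ z ∈ C, ∀ i, dist z (a i z) = dist y (a i y) := by
  obtain ⟨K, hK, hcov⟩ := id hc
  let conj : (X ≃ᵢ X) → ι → X ≃ᵢ X := fun g i => g⁻¹ * a i * g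
  let S : Set (X ≃ᵢ X) := {g | g ∈ Γ ∧ ∃ k ∈ K, ∀ i, dist (g k) (a i (g k)) ≤ R}
  have hconj : (conj '' S).Finite := by
    refine (Set.Finite.pi' fun _ => finite_coarseTransporter hX hΓ hc hK R).subset ?_
    rintro _ ⟨g, ⟨hg, k, hk, h⟩, rfl⟩ i
    exact ⟨Γ.mul_mem (Γ.mul_mem (Γ.inv_mem hg) (ha i)) hg, (k, k), ⟨hk, hk⟩,
      (dist_apply_conj g (a i) k).trans_le (h i)⟩
  obtain ⟨S', -, hS'⟩ := exists_subset_bijOn S conj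
  refine ⟨⋃ g ∈ S', (⇑g) '' K, (hS'.finite_iff_finite.mpr hconj).isCompact_biUnion
    fun g _ => hK.image g.continuous, fun y hy => ?_⟩
  obtain ⟨g, hg, k, hk, rfl⟩ := exists_apply_eq_of_iUnion_image_eq_univ hcov y
  obtain ⟨g', hg', heq⟩ := hS'.surjOn ⟨g, ⟨hg, k, hk, hy⟩, rfl⟩
  refine ⟨g' k, mem_iUnion₂.mpr ⟨g', hg', k, hk, rfl⟩, fun i => ?_⟩
  rw [← dist_apply_conj, ← dist_apply_conj]
  exact congr_arg (fun c : ι → X ≃ᵢ X => dist k (c i k)) heq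

theorem exists_forall_sum_dist_le [Nonempty X] [Fintype ι] :
    ∃ p, ∀ y, ∑ i, dist p (a i p) ≤ ∑ i, dist y (a i y) := by
  obtain ⟨y₀⟩ := ‹Nonempty X›
  set f : X → ℝ := fun y => ∑ i, dist y (a i y)
  have hle (y : X) (i : ι) : dist y (a i y) ≤ f y :=
    Finset.single_le_sum (f := fun i => dist y (a i y)) (fun _ _ => dist_nonneg) (Finset.mem_univ i)
  obtain ⟨C, hC, hCdist⟩ := exists_isCompact_forall_dist_eq hX hΓ hc ha (f y₀)
  have hCf (y : X) (hy : f y ≤ f y₀) : ∃ z ∈ C, f z = f y := by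
    obtain ⟨z, hz, h⟩ := hCdist y fun i => (hle y i).trans hy
    exact ⟨z, hz, Finset.sum_congr rfl fun i _ => h i⟩
  obtain ⟨z₀, hz₀, hf₀⟩ := hCf y₀ le_rfl
  have hfcont : Continuous f :=
    continuous_finsetSum _ fun i _ => continuous_id.dist (a i).continuous
  obtain ⟨p, -, hp⟩ := hC.exists_isMinOn ⟨z₀, hz₀⟩ hfcont.continuousOn
  refine ⟨p, fun y => ?_⟩
  rcases le_total (f y) (f y₀) with hy | hy
  · obtain ⟨z, hz, hfz⟩ := hCf y hy
    exact (hp hz).trans_eq hfz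
  · exact (hp hz₀).trans (hf₀.trans_le hy)

end ActsCocompactly

end CocompactActions

section IsometryExtension

variable {E L : Type*} [NormedAddCommGroup E] [AddGroup L] [MetricSpace X]

/-- `x` is no farther from the points `φ m` than `v` is from the corresponding vectors `Φ m`. -/
def DominatedBy (Φ : L →+ E) (φ : L → X) (v : E) (x : X) : Prop :=
  ∀ m, dist x (φ m) ≤ ‖v - Φ m‖

/-- `x` is the image of `v` under an extension of `Φ m ↦ φ m` that is as contracting as possible:
it does not increase the distance to any dominated point. -/
def IsExtensionValue (Φ : L →+ E) (φ : L → X) (v : E) (x : X) : Prop :=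
  ∀ w y, DominatedBy Φ φ w y → dist y x ≤ ‖w - v‖

variable {Φ : L →+ E} {φ : L → X} {v w : E} {x y : X}

namespace IsExtensionValue

theorem apply_self (m : L) : IsExtensionValue Φ φ (Φ m) (φ m) :=
  fun _ _ hw => hw m

variable (hφ : ∀ m n, dist (φ m) (φ n) = ‖Φ m - Φ n‖)
include hφ

theorem dominatedBy (hx : IsExtensionValue Φ φ v x) : DominatedBy Φ φ v x := by
  intro m
  rw [dist_comm, norm_sub_rev]
  exact hx _ _ fun n => (hφ m n).le

theorem isClosed_setOf_exists [CompleteSpace X] :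
    IsClosed {v | ∃ x, IsExtensionValue Φ φ v x} := by
  refine IsSeqClosed.isClosed fun v w hv hlim => ?_
  choose x hx using hv
  have hcauchy : CauchySeq x := by
    refine Metric.cauchySeq_iff.mpr fun ε hε => ?_
    obtain ⟨N, hN⟩ := Metric.cauchySeq_iff.mp hlim.cauchySeq ε hε
    refine ⟨N, fun i hi j hj => lt_of_le_of_lt ?_ (hN i hi j hj)⟩
    rw [dist_eq_norm]
    exact hx j _ _ ((hx i).dominatedBy hφ)
  obtain ⟨z, hz⟩ := cauchySeq_tendsto_of_complete hcauchy
  exact ⟨z, fun u y hy => le_of_tendsto_of_tendsto' (tendsto_const_nhds.dist hz)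
    (tendsto_const_nhds.sub hlim).norm fun n => hx n u y hy⟩

end IsExtensionValue

variable [InnerProductSpace ℝ E]

/-- The vectors of the form `2⁻ᵏ • Φ m`. -/
def dyadicMultiples {L V : Type*} [AddGroup L] [AddCommGroup V] [Module ℝ V] (Φ : L →+ V) : Set V :=
  {v | ∃ k : ℕ, ∃ m, Φ m = (2 : ℝ) ^ k • v}

namespace DominatedBy

variable (hφ : ∀ m n, dist (φ m) (φ n) = ‖Φ m - Φ n‖)
include hφ

-- Both `φ m` and `φ (-m)` are at distance `‖Φ m‖` from `φ 0`, in opposite directions, and the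
-- detour from one to the other through `x` and `y` is at least as long as the segment.
theorem inner_sub_le_add (hv : DominatedBy Φ φ v x) (hw : DominatedBy Φ φ w y) (m : L) :
    inner ℝ (v - w) (Φ m) ≤ (‖v‖ ^ 2 + ‖w‖ ^ 2) / 2 + ‖Φ m‖ * dist x y := by
  set b := Φ m
  have hdetour : 2 * ‖b‖ ≤ ‖v - b‖ + dist x y + ‖w + b‖ := by
    have hb : dist (φ m) (φ (-m)) = 2 * ‖b‖ := by
      rw [hφ, map_neg, sub_neg_eq_add, ← two_smul ℝ, norm_smul, Real.norm_two]
    have hm := hv m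
    have hnegm := hw (-m)
    rw [dist_comm] at hm
    rw [map_neg, sub_neg_eq_add] at hnegm
    linarith [dist_triangle4 (φ m) x y (φ (-m))]
  have hvb := norm_sub_sq_real v b
  have hwb := norm_add_sq_real w b
  rw [inner_sub_left]
  linarith [mul_le_mul_of_nonneg_left hdetour (norm_nonneg b),
    two_mul_le_add_sq ‖b‖ ‖v - b‖, two_mul_le_add_sq ‖b‖ ‖w + b‖]

theorem inner_sub_le (hv : DominatedBy Φ φ v x) (hw : DominatedBy Φ φ w y) (m : L) :
    inner ℝ (v - w) (Φ m) ≤ ‖Φ m‖ * dist x y := by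
  by_contra! hlt
  obtain ⟨n, hn⟩ := Archimedean.arch ((‖v‖ ^ 2 + ‖w‖ ^ 2) / 2 + 1) (sub_pos.mpr hlt)
  have := inner_sub_le_add hφ hv hw (n • m)
  rw [map_nsmul, ← Nat.cast_smul_eq_nsmul ℝ, inner_smul_right, norm_smul, Real.norm_natCast] at this
  rw [nsmul_eq_mul] at hn
  linarith

theorem norm_sub_le_dist (hdense : Dense (dyadicMultiples Φ)) (hv : DominatedBy Φ φ v x)
    (hw : DominatedBy Φ φ w y) : ‖v - w‖ ≤ dist x y := by
  have hinner (b : E) : inner ℝ (v - w) b ≤ ‖b‖ * dist x y := by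
    refine hdense.induction (P := fun b => inner ℝ (v - w) b ≤ ‖b‖ * dist x y) ?_
      (isClosed_le (by fun_prop) (by fun_prop)) b
    rintro b ⟨k, m, hm⟩
    have := inner_sub_le hφ hv hw m
    rw [hm, inner_smul_right, norm_smul, norm_pow, Real.norm_two, mul_assoc] at this
    exact le_of_mul_le_mul_left this (by positivity)
  rcases (norm_nonneg (v - w)).eq_or_lt with h0 | hpos
  · exact h0 ▸ dist_nonneg
  have := hinner (v - w)
  rw [real_inner_self_eq_norm_mul_norm] at this
  exact le_of_mul_le_mul_left this hpos

end DominatedBy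

namespace IsExtensionValue

variable (hφ : ∀ m n, dist (φ m) (φ n) = ‖Φ m - Φ n‖) (hdense : Dense (dyadicMultiples Φ))
include hφ hdense

theorem dist_eq (hx : IsExtensionValue Φ φ v x)
    (hy : IsExtensionValue Φ φ w y) : dist x y = ‖v - w‖ :=
  le_antisymm (hy v x (hx.dominatedBy hφ))
    ((hx.dominatedBy hφ).norm_sub_le_dist hφ hdense (hy.dominatedBy hφ))

theorem midpoint (hx : IsExtensionValue Φ φ v x)
    (hy : IsExtensionValue Φ φ w y) {m : X} (hm : IsCATMidpoint x y m) :
    IsExtensionValue Φ φ ((2⁻¹ : ℝ) • (v + w)) m := by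
  intro u z hz
  refine le_of_sq_le_sq ((hm z).trans ?_) (norm_nonneg _)
  have hmedian : ‖u - (2⁻¹ : ℝ) • (v + w)‖ ^ 2 =
      (‖u - v‖ ^ 2 + ‖u - w‖ ^ 2) / 2 - ‖v - w‖ ^ 2 / 4 := by
    simp only [norm_sub_sq_real, norm_smul, mul_pow, norm_add_sq_real, inner_smul_right,
      inner_add_right, norm_inv, Real.norm_two]
    ring
  rw [hmedian, hx.dist_eq hφ hdense hy]
  gcongr
  · exact hx u z hz
  · exact hy u z hz

end IsExtensionValue

namespace HasCATMidpoints

variable (hX : HasCATMidpoints X) (hφ : ∀ m n, dist (φ m) (φ n) = ‖Φ m - Φ n‖)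
  (hdense : Dense (dyadicMultiples Φ))
include hX hφ hdense

theorem exists_isExtensionValue_of_mem_dyadicMultiples (hv : v ∈ dyadicMultiples Φ) :
    ∃ x, IsExtensionValue Φ φ v x := by
  obtain ⟨k, m, hm⟩ := hv
  induction k generalizing v with
  | zero =>
    rw [pow_zero, one_smul] at hm
    exact ⟨φ m, hm ▸ .apply_self m⟩
  | succ k ih =>
    obtain ⟨x, hx⟩ := ih (v := (2 : ℝ) • v) (by rw [smul_smul, ← pow_succ, hm])
    obtain ⟨z, hz⟩ := hX x (φ 0)
    have := hx.midpoint hφ hdense (.apply_self 0) hz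
    rw [map_zero, add_zero, inv_smul_smul₀ two_ne_zero] at this
    exact ⟨z, this⟩

theorem exists_isometry_of_dense_dyadicMultiples [CompleteSpace X] : ∃ f : E → X, Isometry f := by
  have hall (v : E) : ∃ x, IsExtensionValue Φ φ v x :=
    hdense.induction (P := fun v => ∃ x, IsExtensionValue Φ φ v x)
      (fun _ => hX.exists_isExtensionValue_of_mem_dyadicMultiples hφ hdense)
      (IsExtensionValue.isClosed_setOf_exists hφ) v
  choose f hf using hall
  exact ⟨f, .of_dist_eq fun v w => by rw [dist_eq_norm, (hf v).dist_eq hφ hdense (hf w)]⟩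

end HasCATMidpoints

end IsometryExtension

section QuadraticForms

section Polar

variable {A : Type*} [AddCommGroup A] {Q : A → ℝ}
  (hQ : ∀ x y, Q (x + y) + Q (x - y) = 2 * Q x + 2 * Q y)
include hQ

theorem polar_self_of_parallelogram (x : A) : QuadraticMap.polar Q x x = 2 * Q x := by
  have h0 := hQ 0 0
  have hx := hQ x x
  rw [add_zero, sub_zero] at h0
  rw [sub_self] at hx
  rw [QuadraticMap.polar]
  linarith

theorem polar_add_left_of_parallelogram (x y z : A) :
    QuadraticMap.polar Q (x + y) z = QuadraticMap.polar Q x z + QuadraticMap.polar Q y z := by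
  have h₁ := hQ (x + z) y
  have h₂ := hQ (x + y) z
  have h₃ := hQ x (z - y)
  have h₄ := hQ z y
  rw [add_right_comm] at h₁
  rw [← add_sub_assoc, sub_sub_eq_add_sub] at h₃
  simp only [QuadraticMap.polar, add_comm y z]
  linarith

theorem exists_biadditive_of_parallelogram :
    ∃ B : A →+ A →+ ℝ, (∀ x y, B x y = B y x) ∧ ∀ x, B x x = Q x := by
  refine ⟨.mk' (fun x => .mk' (fun y => QuadraticMap.polar Q x y / 2) ?_) ?_,
    fun x y => ?_, fun x => ?_⟩
  · intro y z
    simp only [QuadraticMap.polar_comm Q x, polar_add_left_of_parallelogram hQ, add_div]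
  · intro x y
    ext z
    simp only [AddMonoidHom.mk'_apply, AddMonoidHom.add_apply, polar_add_left_of_parallelogram hQ,
      add_div]
  · simp only [AddMonoidHom.mk'_apply, QuadraticMap.polar_comm Q x]
  · simp only [AddMonoidHom.mk'_apply, polar_self_of_parallelogram hQ]
    ring

end Polar

open scoped MatrixOrder Matrix

variable {ι : Type*}

/-- The inclusion of `ℤ^ι` in `ℝ^ι`. -/
def latticeInclusion (ι : Type*) : (ι → ℤ) →+ (ι → ℝ) :=
  (Int.castAddHom ℝ).compLeft ι

theorem exists_isSymm_dotProduct_mulVec_eq [Fintype ι] {Q : (ι → ℤ) → ℝ}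
    (hQ : ∀ x y, Q (x + y) + Q (x - y) = 2 * Q x + 2 * Q y) :
    ∃ G : Matrix ι ι ℝ, G.IsSymm ∧
      ∀ m, latticeInclusion ι m ⬝ᵥ G *ᵥ latticeInclusion ι m = Q m := by
  classical
  obtain ⟨B, hsymm, hB⟩ := exists_biadditive_of_parallelogram hQ
  refine ⟨.of fun i j => B (Pi.single j 1) (Pi.single i 1), Matrix.ext fun i j => hsymm _ _,
    fun m => ?_⟩
  have hm : m = ∑ i, m i • Pi.single i (1 : ℤ) := by
    simp only [← Pi.single_smul, smul_eq_mul, mul_one, Finset.univ_sum_single]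
  rw [← hB]
  conv_rhs => rw [hm]
  simp only [map_sum, map_zsmul, AddMonoidHom.finsetSum_apply, AddMonoidHom.coe_smul, Pi.smul_apply]
  simp only [zsmul_eq_mul, Finset.mul_sum]
  refine Finset.sum_congr rfl fun i _ => (Finset.mul_sum ..).trans ?_
  exact Finset.sum_congr rfl fun j _ => congr_arg _ (mul_comm _ _)

theorem exists_norm_sub_latticeInclusion_le_one [Fintype ι] (x : ι → ℝ) :
    ∃ m, ‖x - latticeInclusion ι m‖ ≤ 1 := by
  refine ⟨fun i => ⌊x i⌋, (pi_norm_le_iff_of_nonneg zero_le_one).mpr fun i => ?_⟩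
  change |Int.fract (x i)| ≤ 1
  rw [Int.abs_fract]
  exact (Int.fract_lt_one _).le

theorem dense_dyadicMultiples_latticeInclusion [Finite ι] :
    Dense (dyadicMultiples (latticeInclusion ι)) := by
  have := Fintype.ofFinite ι
  refine Metric.dense_iff.mpr fun x r hr => ?_
  obtain ⟨k, hk⟩ := exists_pow_lt_of_lt_one hr (one_half_lt_one (α := ℝ))
  obtain ⟨m, hm⟩ := exists_norm_sub_latticeInclusion_le_one ((2 : ℝ) ^ k • x)
  have hk0 : (2 : ℝ) ^ k ≠ 0 := by positivity
  refine ⟨((2 : ℝ) ^ k)⁻¹ • latticeInclusion ι m, ?_, k, m, (smul_inv_smul₀ hk0 _).symm⟩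
  rw [Metric.mem_ball, dist_comm, dist_eq_norm]
  calc ‖x - ((2 : ℝ) ^ k)⁻¹ • latticeInclusion ι m‖
      = (1 / 2) ^ k * ‖(2 : ℝ) ^ k • x - latticeInclusion ι m‖ := by
        rw [← inv_smul_smul₀ hk0 x, ← smul_sub, smul_inv_smul₀ hk0, norm_smul, norm_inv, norm_pow,
          Real.norm_two, one_div, inv_pow]
    _ ≤ (1 / 2) ^ k := mul_le_of_le_one_right (by positivity) hm
    _ < r := hk

theorem posSemidef_of_forall_latticeInclusion [Fintype ι] {G : Matrix ι ι ℝ} (hG : G.IsSymm)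
    (hnonneg : ∀ m, 0 ≤ latticeInclusion ι m ⬝ᵥ G *ᵥ latticeInclusion ι m) : G.PosSemidef := by
  refine .of_dotProduct_mulVec_nonneg hG fun x => ?_
  refine dense_dyadicMultiples_latticeInclusion.induction
    (P := fun x => 0 ≤ star x ⬝ᵥ G *ᵥ x) ?_ (isClosed_le (by fun_prop) (by fun_prop)) x
  rintro x ⟨k, m, hm⟩
  have := hnonneg m
  rw [hm, Matrix.mulVec_smul, dotProduct_smul, smul_dotProduct] at this
  simpa using this

theorem exists_norm_sq_eq_dotProduct_mulVec [Fintype ι] {G : Matrix ι ι ℝ} (hG : G.PosSemidef) :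
    ∃ Φ : (ι → ℝ) →L[ℝ] EuclideanSpace ℝ ι, ∀ x, ‖Φ x‖ ^ 2 = x ⬝ᵥ G *ᵥ x := by
  classical
  obtain ⟨B, rfl⟩ := CStarAlgebra.nonneg_iff_eq_star_mul_self.mp hG.nonneg
  refine ⟨((WithLp.linearEquiv 2 ℝ (ι → ℝ)).symm.toLinearMap ∘ₗ B.mulVecLin).toContinuousLinearMap,
    fun x => ?_⟩
  rw [EuclideanSpace.real_norm_sq_eq, ← Matrix.mulVec_mulVec, Matrix.dotProduct_mulVec,
    Matrix.star_eq_conjTranspose, Matrix.vecMul_conjTranspose, star_trivial, star_trivial]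
  simp only [dotProduct, ← sq]
  rfl

theorem exists_norm_sq_eq_of_parallelogram [Fintype ι] {Q : (ι → ℤ) → ℝ}
    (hQ : ∀ x y, Q (x + y) + Q (x - y) = 2 * Q x + 2 * Q y) (hnonneg : ∀ m, 0 ≤ Q m) :
    ∃ Φ : (ι → ℝ) →L[ℝ] EuclideanSpace ℝ ι, ∀ m, ‖Φ (latticeInclusion ι m)‖ ^ 2 = Q m := by
  obtain ⟨G, hsymm, hG⟩ := exists_isSymm_dotProduct_mulVec_eq hQ
  obtain ⟨Φ, hΦ⟩ := exists_norm_sq_eq_dotProduct_mulVec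
    (posSemidef_of_forall_latticeInclusion hsymm fun m => (hnonneg m).trans_eq (hG m).symm)
  exact ⟨Φ, fun m => (hΦ _).trans (hG m)⟩

variable [Finite ι] {F : Type*} [NormedAddCommGroup F] [NormedSpace ℝ F]

theorem injective_of_finite_norm_le (Φ : (ι → ℝ) →L[ℝ] F)
    (hfin : ∀ R, {m | ‖Φ (latticeInclusion ι m)‖ ≤ R}.Finite) : Function.Injective Φ := by
  have := Fintype.ofFinite ι
  refine (injective_iff_map_eq_zero Φ).mpr fun x hx => ?_
  obtain ⟨M, hM⟩ := ((hfin ‖Φ‖).image (latticeInclusion ι)).isBounded.exists_norm_le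
  have hbound (n : ℕ) : n * ‖x‖ ≤ M + 1 := by
    obtain ⟨m, hm⟩ := exists_norm_sub_latticeInclusion_le_one ((n : ℝ) • x)
    have hmem : ‖Φ (latticeInclusion ι m)‖ ≤ ‖Φ‖ := by
      have := Φ.le_opNorm_of_le hm
      rwa [map_sub, map_smul, hx, smul_zero, zero_sub, norm_neg, mul_one] at this
    have := norm_sub_norm_le ((n : ℝ) • x) (latticeInclusion ι m)
    rw [norm_smul, Real.norm_natCast] at this
    linarith [hM _ (mem_image_of_mem _ hmem)]
  by_contra hne
  obtain ⟨n, hn⟩ := exists_nat_gt ((M + 1) / ‖x‖)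
  exact (hbound n).not_gt ((div_lt_iff₀ (norm_pos_iff.mpr hne)).mp hn)

theorem dense_dyadicMultiples_comp (Φ : (ι → ℝ) →L[ℝ] F) (hΦ : Function.Surjective Φ) :
    Dense (dyadicMultiples (Φ.toLinearMap.toAddMonoidHom.comp (latticeInclusion ι))) := by
  refine (hΦ.denseRange.dense_image Φ.continuous dense_dyadicMultiples_latticeInclusion).mono ?_
  rintro _ ⟨x, ⟨k, m, hm⟩, rfl⟩
  exact ⟨k, m, by simp [hm]⟩

end QuadraticForms

section FlatTorus

variable [MetricSpace X] {Γ : Subgroup (X ≃ᵢ X)} {ι : Type*}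
  {ρ : Multiplicative (ι → ℤ) →* X ≃ᵢ X}

theorem dist_apply_ofAdd_apply_ofAdd (p : X) (m n : ι → ℤ) :
    dist (ρ (.ofAdd m) p) (ρ (.ofAdd n) p) = dist p (ρ (.ofAdd (n - m)) p) := by
  rw [← neg_add_eq_sub, ofAdd_add, ofAdd_neg, map_mul, map_inv, dist_apply_inv_mul]

namespace HasCATMidpoints

variable (hX : HasCATMidpoints X)
include hX

theorem exists_forall_onAxis [Finite ι] [Nonempty X] (hΓ : ActsProperly Γ)
    (hc : ActsCocompactly Γ) (hρΓ : ∀ a, ρ a ∈ Γ) : ∃ p, ∀ a, OnAxis (ρ a) p := by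
  classical
  have := Fintype.ofFinite ι
  obtain ⟨p, hp⟩ := hc.exists_forall_sum_dist_le hX hΓ
    (a := fun i => ρ (.ofAdd (Pi.single i 1))) fun _ => hρΓ _
  exact ⟨p, hX.onAxis_of_forall_single
    (hX.onAxis_of_forall_sum_dist_le (fun _ _ => (Commute.all _ _).map ρ) hp)⟩

theorem exists_norm_eq_dist_of_forall_onAxis [Fintype ι] {p : X} (hp : ∀ a, OnAxis (ρ a) p) :
    ∃ Φ : (ι → ℝ) →L[ℝ] EuclideanSpace ℝ ι,
      ∀ m, ‖Φ (latticeInclusion ι m)‖ = dist p (ρ (.ofAdd m) p) := by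
  obtain ⟨Φ, hΦ⟩ := exists_norm_sq_eq_of_parallelogram
    (Q := fun m : ι → ℤ => dist p (ρ (.ofAdd m) p) ^ 2)
    (fun m n => by
      simp only [ofAdd_add, ofAdd_sub, div_eq_mul_inv, map_mul, map_inv]
      exact hX.parallelogram_eq ((Commute.all _ _).map ρ) (hp _) (hp _))
    (fun m => sq_nonneg _)
  exact ⟨Φ, fun m => (sq_eq_sq₀ (norm_nonneg _) dist_nonneg).mp (hΦ m)⟩

theorem exists_isometry_euclideanSpace [Fintype ι] [Nonempty X] (hΓ : ActsProperly Γ)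
    (hc : ActsCocompactly Γ) (hρΓ : ∀ a, ρ a ∈ Γ) (hρ : Function.Injective ρ) :
    ∃ f : EuclideanSpace ℝ ι → X, Isometry f := by
  have := hc.properSpace hX hΓ
  obtain ⟨p, hp⟩ := hX.exists_forall_onAxis hΓ hc hρΓ
  obtain ⟨Φ, hΦ⟩ := hX.exists_norm_eq_dist_of_forall_onAxis hp
  have hfin (R : ℝ) : {m | ‖Φ (latticeInclusion ι m)‖ ≤ R}.Finite := by
    simp only [hΦ]
    exact ((hc.finite_dist_apply_le hX hΓ p R).preimage
      (hρ.comp Multiplicative.ofAdd.injective).injOn).subset fun m hm => ⟨hρΓ _, hm⟩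
  have hsurj : Function.Surjective Φ :=
    (LinearMap.injective_iff_surjective_of_finrank_eq_finrank (f := Φ.toLinearMap)
      (by simp)).mp (injective_of_finite_norm_le Φ hfin)
  refine hX.exists_isometry_of_dense_dyadicMultiples (φ := fun m => ρ (.ofAdd m) p) (fun m n => ?_)
    (dense_dyadicMultiples_comp Φ hsurj)
  rw [dist_apply_ofAdd_apply_ofAdd, ← hΦ, map_sub, map_sub, norm_sub_rev]
  rfl

end HasCATMidpoints

end FlatTorus

theorem no_ZxZ_subgroup_of_visibility_general {X ι : Type*} [MetricSpace X] [Fintype ι] [Nonempty ι]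
    (hgeo : GeodesicSpace X) (hcat : CATzero X)
    (hnoflat : ¬ ∃ f : EuclideanSpace ℝ ι → X, Isometry f) {Γ : Subgroup (X ≃ᵢ X)}
    (hΓ : ActsProperly Γ) (hc : ActsCocompactly Γ) (H : Subgroup Γ) :
    ¬ Nonempty (H ≃* Multiplicative (ι → ℤ)) := by
  rintro ⟨e⟩
  let ρ : Multiplicative (ι → ℤ) →* X ≃ᵢ X := Γ.subtype.comp (H.subtype.comp e.symm.toMonoidHom)
  have hρ : Function.Injective ρ :=
    Γ.subtype_injective.comp (H.subtype_injective.comp e.symm.injective)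
  rcases isEmpty_or_nonempty X with _ | _
  · have : Subsingleton (X ≃ᵢ X) := ⟨fun _ _ => IsometryEquiv.ext fun x => isEmptyElim x⟩
    exact not_subsingleton _ hρ.subsingleton
  · exact hnoflat ((hcat.hasCATMidpoints hgeo).exists_isometry_euclideanSpace hΓ hc
      (fun a => (H.subtype (e.symm a)).2) hρ)

/-- **Preissman-type theorem for visibility manifolds**: if the universal
cover `X` of a closed nonpositively curved manifold contains no flat plane,
then the fundamental group (realized as the deck group `Γ`) has no subgroup
isomorphic to `ℤ ⊕ ℤ`. -/
theorem no_ZxZ_subgroup_of_visibility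
    (X : Type*) [MetricSpace X] [CompleteSpace X]
    (hgeo : GeodesicSpace X) (hcat : CATzero X)
    (hnoflat : ¬ ∃ f : EuclideanSpace ℝ (Fin 2) → X, Isometry f)
    (Γ : Subgroup (X ≃ᵢ X))
    (hfree : ∀ γ ∈ Γ, γ ≠ 1 → ∀ x : X, γ x ≠ x)
    (hproper : ∀ x : X, ∃ V : Set X, IsOpen V ∧ x ∈ V ∧
      Set.Finite {γ : X ≃ᵢ X | γ ∈ Γ ∧ ((⇑γ) '' V ∩ V).Nonempty})
    (hcocompact : ∃ K : Set X, IsCompact K ∧ (⋃ γ ∈ Γ, (⇑γ) '' K) = univ) :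
    ∀ H : Subgroup Γ, ¬ Nonempty (H ≃* Multiplicative (ℤ × ℤ)) := by
  rintro H ⟨e⟩
  exact no_ZxZ_subgroup_of_visibility_general hgeo hcat hnoflat hproper hcocompact H
    ⟨e.trans (LinearEquiv.finTwoArrow ℤ ℤ).symm.toAddEquiv.toMultiplicative⟩
end
end
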